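/- Let n ≥ 3 be a convex polygon's number of vertices, and let P be the 2n-point configuration consisting of the n vertices of a regular n-gon together with n points placed inside the polygon infinitesimally close to the midpoints of its n edges (generically, so that the configuration is generic). Then for two adjacent polygon vertices P,Q with S the near-midpoint of edge [P,Q]: n(P,Q) = 2n−1. Consequently P ∼ Q under the Orchard relation of the 2n-point configuration. -/

import Mathlib

open scoped Classical

noncomputable section

/-- Orientation determinant of two vectors in the plane. -/
def det2 (u v : ℝ × ℝ) : ℝ := u.1 * v.2 - u.2 * v.1

/-- The line through `A` and `B` separates the points `P` and `Q`
(they lie in distinct open half-planes determined by the line). -/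
def SepLine (A B P Q : ℝ × ℝ) : Prop :=
  det2 (B - A) (P - A) * det2 (B - A) (Q - A) < 0

/-- A finite planar point set is a generic configuration if no three of its
points are collinear. -/
def Generic (C : Finset (ℝ × ℝ)) : Prop :=
  ∀ a ∈ C, ∀ b ∈ C, ∀ c ∈ C, a ≠ b → a ≠ c → b ≠ c →
    ¬ Collinear ℝ ({a, b, c} : Set (ℝ × ℝ))

/-- `nsep C P Q` is the number of lines spanned by (unordered) pairs of points of
`C \ {P,Q}` that separate `P` from `Q`. -/
def nsep (C : Finset (ℝ × ℝ)) (P Q : ℝ × ℝ) : ℕ :=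
  (((C \ {P, Q}).powersetCard 2).filter
    (fun s => ∃ A ∈ s, ∃ B ∈ s, A ≠ B ∧ SepLine A B P Q)).card

/-- The Orchard relation: `P ∼ Q` iff `n(P,Q) ≡ n - 3 (mod 2)` where `n = |C|`. -/
def Orchard (C : Finset (ℝ × ℝ)) (P Q : ℝ × ℝ) : Prop :=
  (nsep C P Q : ℤ) ≡ (C.card : ℤ) - 3 [ZMOD 2]

/-- A configuration is monochromatic if all its points are Orchard-equivalent. -/
def Mono (C : Finset (ℝ × ℝ)) : Prop :=
  ∀ P ∈ C, ∀ Q ∈ C, P ≠ Q → Orchard C P Q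

/-- A configuration is in convex position if each of its points is a vertex of
the convex hull. -/
def ConvexPos (C : Finset (ℝ × ℝ)) : Prop :=
  ∀ P ∈ C, P ∉ convexHull ℝ ((C : Set (ℝ × ℝ)) \ {P})

/-- The `k`-th vertex of the regular `n`-gon inscribed in the unit circle
centered at the origin. -/
def vtx (n : ℕ) (k : Fin n) : ℝ × ℝ :=
  (Real.cos (2 * Real.pi * k / n), Real.sin (2 * Real.pi * k / n))

/-- The configuration consisting of the vertices of the regular `n`-gon together
with its barycenter (the origin). -/
def ngonWithCenter (n : ℕ) : Finset (ℝ × ℝ) :=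
  insert ((0, 0) : ℝ × ℝ) (Finset.image (vtx n) Finset.univ)

/-!
Let `PQ` be an edge and `S` the point near its midpoint. Seen from any of the remaining `2n - 3`
points, `S` lies strictly between `P` and `Q`, so every line through `S` separates them. A line
through two of the remaining points separates `P` from `Q` exactly when the angular orders around
`P` and around `Q` disagree on the pair. For exact midpoints both orders are the boundary order,
except that the two points of the other edge at `P` are collinear with `P`, and similarly for `Q`.
A small perturbation preserves every strict comparison, and pushing the midpoints inwards resolves
both collinearities against the boundary order, which gives `(2n - 3) + 2` separating lines.
-/

section Orientation

/-- The signed doubled area of the triangle `a b c`; it is positive when the triangle is traversed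
counterclockwise. -/
def orient (a b c : ℝ × ℝ) : ℝ := det2 (b - a) (c - a)

theorem orient_eq (a b c : ℝ × ℝ) :
    orient a b c = (b.1 - a.1) * (c.2 - a.2) - (b.2 - a.2) * (c.1 - a.1) := rfl

theorem orient_rotate (a b c : ℝ × ℝ) : orient a b c = orient b c a := by
  simp only [orient_eq]; ring

theorem orient_swap (a b c : ℝ × ℝ) : orient a b c = -orient b a c := by
  simp only [orient_eq]; ring

@[simp]
theorem orient_self_left (a b : ℝ × ℝ) : orient a a b = 0 := by simp [orient_eq]

@[simp]
theorem orient_self_right (a b : ℝ × ℝ) : orient a b b = 0 := by rw [orient_eq]; ring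

@[simp]
theorem orient_self_outer (a b : ℝ × ℝ) : orient a b a = 0 := by simp [orient_eq]

/-- Orientation as an affine functional of its third argument. -/
def orientAffine (a b : ℝ × ℝ) : ℝ × ℝ →ᵃ[ℝ] ℝ :=
  AffineMap.mk' (orient a b)
    ((b - a).1 • LinearMap.snd ℝ ℝ ℝ - (b - a).2 • LinearMap.fst ℝ ℝ ℝ) a
    fun c => by simp [orient_eq]

theorem convex_orient_nonneg (a b : ℝ × ℝ) : Convex ℝ {x | 0 ≤ orient a b x} :=
  (convex_Ici 0).affine_preimage (orientAffine a b)

theorem isOpenMap_orient {a b : ℝ × ℝ} (hab : a ≠ b) : IsOpenMap (orient a b) := by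
  refine AffineMap.isOpenMap_linear_iff (f := orientAffine a b) |>.1
    (LinearMap.isOpenMap_of_finiteDimensional _
      (LinearMap.surjective_iff_ne_zero.2 fun h => hab ?_))
  have hfst := LinearMap.congr_fun h (0, 1)
  have hsnd := LinearMap.congr_fun h (1, 0)
  simp only [orientAffine, AffineMap.mk'_linear, LinearMap.sub_apply, LinearMap.smul_apply,
    LinearMap.snd_apply, LinearMap.fst_apply, LinearMap.zero_apply, Prod.fst_sub, Prod.snd_sub,
    smul_eq_mul] at hfst hsnd
  ext <;> linarith

theorem orient_pos_of_mem_interior {s : Set (ℝ × ℝ)} {a b x : ℝ × ℝ} (hab : a ≠ b)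
    (hs : ∀ y ∈ s, 0 ≤ orient a b y) (hx : x ∈ interior s) : 0 < orient a b x := by
  have h : x ∈ interior (orient a b ⁻¹' Set.Ici 0) := interior_mono hs hx
  simpa using (isOpenMap_orient hab).interior_preimage_subset_preimage_interior h

theorem orient_midpoint_right (a b c c' : ℝ × ℝ) :
    orient a b (midpoint ℝ c c') = (orient a b c + orient a b c') / 2 := by
  have h := (orientAffine a b).map_midpoint c c'
  rw [midpoint_eq_smul_add (R := ℝ) (orientAffine a b c), smul_eq_mul, invOf_eq_inv] at h
  exact h.trans (inv_mul_eq_div _ _)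

theorem orient_midpoint_middle (a b b' c : ℝ × ℝ) :
    orient a (midpoint ℝ b b') c = (orient a b c + orient a b' c) / 2 := by
  simp only [← orient_rotate c a, orient_midpoint_right]

theorem orient_midpoint_left (a a' b c : ℝ × ℝ) :
    orient (midpoint ℝ a a') b c = (orient a b c + orient a' b c) / 2 := by
  simp only [orient_rotate _ b c, orient_midpoint_right]

theorem sepLine_iff {A B P Q : ℝ × ℝ} : SepLine A B P Q ↔ orient P A B * orient Q A B < 0 := by
  rw [orient_rotate P, orient_rotate Q]; rfl

theorem sepLine_comm {A B P Q : ℝ × ℝ} : SepLine A B P Q ↔ SepLine B A P Q := by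
  simp only [SepLine, ← orient.eq_def, orient_swap A B, neg_mul_neg]

end Orientation

section SeparatingLines

theorem exists_mem_pair_sepLine_iff {A B P Q : ℝ × ℝ} (hAB : A ≠ B) :
    (∃ A' ∈ ({A, B} : Finset (ℝ × ℝ)), ∃ B' ∈ ({A, B} : Finset (ℝ × ℝ)),
      A' ≠ B' ∧ SepLine A' B' P Q) ↔ SepLine A B P Q := by
  simp [hAB, hAB.symm, sepLine_comm (A := B)]

variable {ι : Type*} [LinearOrder ι]

theorem pair_inj_of_lt {a b c d : ι} (hab : a < b) (hcd : c < d)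
    (h : ({a, b} : Finset ι) = {c, d}) : (a, b) = (c, d) := by
  rw [← Finset.coe_inj, Finset.coe_pair, Finset.coe_pair, Set.pair_eq_pair_iff] at h
  rcases h with ⟨rfl, rfl⟩ | ⟨rfl, rfl⟩
  · rfl
  · exact absurd hab hcd.not_gt

theorem card_filter_sepLine_image {r : Finset ι} {z : ι → ℝ × ℝ} (hz : Set.InjOn z r)
    (P Q : ℝ × ℝ) :
    (((r.image z).powersetCard 2).filter
        fun t => ∃ A ∈ t, ∃ B ∈ t, A ≠ B ∧ SepLine A B P Q).card =
      ((r ×ˢ r).filter fun e => e.1 < e.2 ∧ SepLine (z e.1) (z e.2) P Q).card := by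
  symm
  refine Finset.card_bij (fun e _ => {z e.1, z e.2}) ?_ ?_ ?_
  · rintro ⟨a, b⟩ he
    obtain ⟨⟨ha, hb⟩, hab, hsep⟩ : (a ∈ r ∧ b ∈ r) ∧ a < b ∧ SepLine (z a) (z b) P Q := by
      simpa using he
    have hne : z a ≠ z b := hz.ne ha hb hab.ne
    rw [Finset.mem_filter, Finset.mem_powersetCard, exists_mem_pair_sepLine_iff hne]
    exact ⟨⟨Finset.insert_subset (Finset.mem_image_of_mem z ha)
      (Finset.singleton_subset_iff.2 (Finset.mem_image_of_mem z hb)), Finset.card_pair hne⟩, hsep⟩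
  · rintro ⟨a, b⟩ he ⟨c, d⟩ hf hef
    simp only [Finset.mem_filter, Finset.mem_product] at he hf
    refine pair_inj_of_lt he.2.1 hf.2.1 (Finset.image_injOn_powerset_of_injOn hz ?_ ?_ ?_)
    · simpa [Set.insert_subset_iff, Finset.insert_subset_iff] using he.1
    · simpa [Set.insert_subset_iff, Finset.insert_subset_iff] using hf.1
    · simpa [Finset.image_insert] using hef
  · intro t ht
    rw [Finset.mem_filter, Finset.mem_powersetCard] at ht
    obtain ⟨⟨ht, hcard⟩, hsep⟩ := ht
    obtain ⟨A, B, hAB, rfl⟩ := Finset.card_eq_two.1 hcard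
    rw [exists_mem_pair_sepLine_iff hAB] at hsep
    obtain ⟨a, ha, rfl⟩ := Finset.mem_image.1 (ht (Finset.mem_insert_self A {B}))
    obtain ⟨b, hb, rfl⟩ :=
      Finset.mem_image.1 (ht (Finset.mem_insert_of_mem (Finset.mem_singleton_self B)))
    rcases lt_trichotomy a b with hab | rfl | hba
    · exact ⟨(a, b), by simp [ha, hb, hab, hsep], rfl⟩
    · exact absurd rfl hAB
    · exact ⟨(b, a), by simp [ha, hb, hba, sepLine_comm.1 hsep], Finset.pair_comm _ _⟩

theorem nsep_image {s : Finset ι} {z : ι → ℝ × ℝ} (hz : Set.InjOn z s) {p q : ι}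
    (hp : p ∈ s) (hq : q ∈ s) :
    nsep (s.image z) (z p) (z q) =
      (((s \ {p, q}) ×ˢ (s \ {p, q})).filter fun e =>
        e.1 < e.2 ∧ SepLine (z e.1) (z e.2) (z p) (z q)).card := by
  have hpq : {p, q} ⊆ s := Finset.insert_subset hp (Finset.singleton_subset_iff.2 hq)
  have hsdiff : s.image z \ {z p, z q} = (s \ {p, q}).image z := by
    rw [Finset.image_sdiff_of_injOn hz hpq, Finset.image_insert, Finset.image_singleton]
  rw [nsep, hsdiff]
  exact card_filter_sepLine_image (hz.mono (Finset.coe_subset.2 Finset.sdiff_subset)) _ _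

end SeparatingLines

/-- The orientations met around the edge with end points `z 0` and `z 2`, for points
`z 0, …, z (2n - 1)` listed counterclockwise along the boundary of a convex `n`-gon: even indices
stand for the vertices, odd ones for points pushed into the polygon from the midpoints of the
edges. -/
structure EdgePattern (n : ℕ) (z : ℕ → ℝ × ℝ) : Prop where
  zero_one_pos : ∀ b, 3 ≤ b → b < 2 * n → 0 < orient (z 0) (z 1) (z b)
  one_two_pos : ∀ b, 3 ≤ b → b < 2 * n → 0 < orient (z 1) (z 2) (z b)
  zero_pos : ∀ a b, 3 ≤ a → a < b → b < 2 * n → a ≠ 2 * n - 2 → 0 < orient (z 0) (z a) (z b)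
  two_pos : ∀ a b, 3 ≤ a → a < b → b < 2 * n → b ≠ 4 → 0 < orient (z 2) (z a) (z b)
  zero_last_neg : orient (z 0) (z (2 * n - 2)) (z (2 * n - 1)) < 0
  two_first_neg : orient (z 2) (z 3) (z 4) < 0

/-- The index pairs whose lines separate `z 0` from `z 2` in an `EdgePattern`. -/
def sepPairs (n : ℕ) : Finset (ℕ × ℕ) :=
  {1} ×ˢ Finset.Ico 3 (2 * n) ∪ {(3, 4), (2 * n - 2, 2 * n - 1)}

theorem mem_sepPairs {n a b : ℕ} : (a, b) ∈ sepPairs n ↔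
    (a = 1 ∧ 3 ≤ b ∧ b < 2 * n) ∨ (a = 3 ∧ b = 4) ∨ (a = 2 * n - 2 ∧ b = 2 * n - 1) := by
  simp only [sepPairs, Finset.mem_union, Finset.mem_product, Finset.mem_insert,
    Finset.mem_singleton, Finset.mem_Ico, Prod.mk.injEq]

theorem card_sepPairs {n : ℕ} (hn : 3 ≤ n) : (sepPairs n).card = 2 * n - 1 := by
  have hdisj : Disjoint ({1} ×ˢ Finset.Ico 3 (2 * n))
      ({(3, 4), (2 * n - 2, 2 * n - 1)} : Finset (ℕ × ℕ)) := by
    rw [Finset.disjoint_left]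
    rintro ⟨a, b⟩
    simp only [Finset.mem_product, Finset.mem_insert, Finset.mem_singleton, Prod.mk.injEq]
    omega
  have hne : (3, 4) ≠ (2 * n - 2, 2 * n - 1) := by
    rw [ne_eq, Prod.mk.injEq]; omega
  rw [sepPairs, Finset.card_union_of_disjoint hdisj, Finset.card_pair hne, Finset.card_product,
    Finset.card_singleton, Nat.card_Ico]
  omega

namespace EdgePattern

variable {n : ℕ} {z : ℕ → ℝ × ℝ}

theorem ne_of_lt (h : EdgePattern n z) (hn : 3 ≤ n) {a b : ℕ} (hab : a < b) (hb : b < 2 * n) :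
    z a ≠ z b := by
  intro e
  have h01 := h.zero_one_pos (max 3 b) (by omega) (by omega)
  have h12 := h.one_two_pos (max 3 b) (by omega) (by omega)
  obtain rfl | rfl | rfl | ha : a = 0 ∨ a = 1 ∨ a = 2 ∨ 3 ≤ a := by omega
  · obtain rfl | rfl | hb3 : b = 1 ∨ b = 2 ∨ 3 ≤ b := by omega
    · simp [e] at h01
    · rw [orient_swap, ← e] at h12
      exact lt_asymm h01 (neg_pos.1 h12)
    · simp [hb3, e] at h01
  · obtain rfl | hb3 : b = 2 ∨ 3 ≤ b := by omega
    · simp [e] at h12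
    · simp [hb3, e] at h12
  · simp [show 3 ≤ b from hab, e] at h12
  · by_cases hlast : a = 2 * n - 2
    · obtain rfl : b = 2 * n - 1 := by omega
      simpa [← hlast, e] using h.zero_last_neg
    · simpa [e] using h.zero_pos a b ha hab hb hlast

theorem injOn (h : EdgePattern n z) (hn : 3 ≤ n) : Set.InjOn z (Finset.range (2 * n)) := by
  intro a ha b hb e
  rw [Finset.mem_coe, Finset.mem_range] at ha hb
  by_contra hab
  rcases Nat.lt_or_gt_of_ne hab with hab | hba
  · exact h.ne_of_lt hn hab hb e
  · exact h.ne_of_lt hn hba ha e.symm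

theorem sepLine_one (h : EdgePattern n z) {b : ℕ} (hb3 : 3 ≤ b) (hb : b < 2 * n) :
    SepLine (z 1) (z b) (z 0) (z 2) := by
  rw [sepLine_iff, orient_swap (z 2)]
  exact mul_neg_of_pos_of_neg (h.zero_one_pos b hb3 hb) (neg_neg_of_pos (h.one_two_pos b hb3 hb))

theorem sepLine_iff_of_three_le (h : EdgePattern n z) (hn : 3 ≤ n) {a b : ℕ} (ha : 3 ≤ a)
    (hab : a < b) (hb : b < 2 * n) :
    SepLine (z a) (z b) (z 0) (z 2) ↔ b = 4 ∨ a = 2 * n - 2 := by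
  rw [sepLine_iff]
  by_cases hfirst : b = 4
  · obtain rfl : a = 3 := by omega
    subst hfirst
    exact iff_of_true (mul_neg_of_pos_of_neg (h.zero_pos 3 4 ha hab hb (by omega)) h.two_first_neg)
      (Or.inl rfl)
  have htwo := h.two_pos a b ha hab hb hfirst
  by_cases hlast : a = 2 * n - 2
  · obtain rfl : b = 2 * n - 1 := by omega
    exact iff_of_true (mul_neg_of_neg_of_pos (hlast ▸ h.zero_last_neg) htwo) (Or.inr hlast)
  · exact iff_of_false (mul_pos (h.zero_pos a b ha hab hb hlast) htwo).not_gt (by tauto)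

theorem sepLine_iff_mem_sepPairs (h : EdgePattern n z) (hn : 3 ≤ n) {a b : ℕ} (hab : a < b)
    (hb : b < 2 * n) (ha0 : a ≠ 0) (ha2 : a ≠ 2) (hb2 : b ≠ 2) :
    SepLine (z a) (z b) (z 0) (z 2) ↔ (a, b) ∈ sepPairs n := by
  rw [mem_sepPairs]
  obtain rfl | ha : a = 1 ∨ 3 ≤ a := by omega
  · exact iff_of_true (h.sepLine_one (by omega) hb) (by omega)
  · rw [h.sepLine_iff_of_three_le hn ha hab hb]
    omega

theorem nsep_eq (h : EdgePattern n z) (hn : 3 ≤ n) :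
    nsep ((Finset.range (2 * n)).image z) (z 0) (z 2) = 2 * n - 1 := by
  rw [nsep_image (h.injOn hn) (Finset.mem_range.2 (by omega)) (Finset.mem_range.2 (by omega)),
    ← card_sepPairs hn]
  congr 1
  ext ⟨a, b⟩
  simp only [Finset.mem_filter, Finset.mem_product, Finset.mem_sdiff, Finset.mem_range,
    Finset.mem_insert, Finset.mem_singleton, not_or]
  constructor
  · rintro ⟨⟨⟨-, ha0, ha2⟩, hb, -, hb2⟩, hab, hsep⟩
    exact (h.sepLine_iff_mem_sepPairs hn hab hb ha0 ha2 hb2).1 hsep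
  · intro hmem
    have hcases := mem_sepPairs.1 hmem
    refine ⟨by omega, by omega, ?_⟩
    exact (h.sepLine_iff_mem_sepPairs hn (by omega) (by omega) (by omega) (by omega)
      (by omega)).2 hmem

theorem orchard (h : EdgePattern n z) (hn : 3 ≤ n) :
    Orchard ((Finset.range (2 * n)).image z) (z 0) (z 2) := by
  rw [Orchard, h.nsep_eq hn, Finset.card_image_of_injOn (h.injOn hn), Finset.card_range,
    Int.modEq_iff_dvd]
  omega

end EdgePattern

section ConvexPolygon

/-- The points `v 0, …, v (n - 1)` are the vertices of a strictly convex polygon, listed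
counterclockwise. -/
def IsConvexPolygon {n : ℕ} (v : Fin n → ℝ × ℝ) : Prop :=
  ∀ ⦃i j k : Fin n⦄, i < j → j < k → 0 < orient (v i) (v j) (v k)

open scoped Fin.CommRing Fin.NatCast

variable {n : ℕ} [NeZero n] {v m : Fin n → ℝ × ℝ}

namespace IsConvexPolygon

theorem orient_add_pos (hv : IsConvexPolygon v) (k : Fin n) {i j : Fin n} (hi : 0 < i)
    (hij : i < j) : 0 < orient (v k) (v (k + i)) (v (k + j)) := by
  have hki := Fin.val_add_eq_ite k i
  have hkj := Fin.val_add_eq_ite k j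
  rw [Fin.lt_def] at hi hij
  rw [Fin.val_zero] at hi
  obtain h | h | h : (k < k + i ∧ k + i < k + j) ∨ (k + j < k ∧ k < k + i) ∨
      (k + i < k + j ∧ k + j < k) := by
    simp only [Fin.lt_def]
    split_ifs at hki hkj <;> omega
  · exact hv h.1 h.2
  · rw [← orient_rotate]; exact hv h.1 h.2
  · rw [orient_rotate]; exact hv h.1 h.2

theorem orient_pos (hv : IsConvexPolygon v) (k : Fin n) {a b c : ℕ} (hab : a < b) (hbc : b < c)
    (hca : c < a + n) :
    0 < orient (v (k + (a : Fin n))) (v (k + (b : Fin n))) (v (k + (c : Fin n))) := by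
  obtain ⟨i, rfl⟩ := Nat.exists_eq_add_of_lt hab
  obtain ⟨j, rfl⟩ := Nat.exists_eq_add_of_lt hbc
  have h := hv.orient_add_pos (k + (a : Fin n)) (i := (i + 1 : ℕ)) (j := (i + 1 + (j + 1) : ℕ))
    ?_ ?_
  · convert h using 3 <;> push_cast <;> ring
  all_goals
    rw [Fin.lt_def]
    simp only [Fin.val_natCast, Fin.val_zero, Nat.mod_eq_of_lt (show i + 1 < n by omega),
      Nat.mod_eq_of_lt (show i + 1 + (j + 1) < n by omega)]
    omega

theorem orient_nonneg (hv : IsConvexPolygon v) (k : Fin n) {a b c : ℕ} (hab : a ≤ b) (hbc : b ≤ c)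
    (hca : c ≤ a + n) :
    0 ≤ orient (v (k + (a : Fin n))) (v (k + (b : Fin n))) (v (k + (c : Fin n))) := by
  rcases hab.eq_or_lt with rfl | hab
  · simp
  rcases hbc.eq_or_lt with rfl | hbc
  · simp
  rcases hca.eq_or_lt with rfl | hca
  · simp
  · exact (hv.orient_pos k hab hbc hca).le

theorem orient_edge_pos (hv : IsConvexPolygon v) (hn : 3 ≤ n) (k : Fin n) {x : ℝ × ℝ}
    (hx : x ∈ interior (convexHull ℝ (Set.range v))) : 0 < orient (v k) (v (k + 1)) x := by
  have hpos := hv.orient_pos k zero_lt_one one_lt_two (by omega)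
  have hne : v k ≠ v (k + 1) := fun e => by simp [e] at hpos
  have hvertex : Set.range v ⊆ {y | 0 ≤ orient (v k) (v (k + 1)) y} := by
    rintro _ ⟨i, rfl⟩
    rcases eq_or_ne i k with rfl | hik
    · simp
    · have hd : 1 ≤ (i - k).val := Nat.one_le_iff_ne_zero.2 fun h =>
        hik (sub_eq_zero.1 (Fin.val_eq_zero_iff.1 h))
      simpa using hv.orient_nonneg k zero_le_one hd (by omega)
  exact orient_pos_of_mem_interior hne (convexHull_min hvertex (convex_orient_nonneg _ _)) hx

end IsConvexPolygon

/-- The midpoint of the edge from `v i` to `v (i + 1)`. -/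
def edgeMidpoint (v : Fin n → ℝ × ℝ) (i : Fin n) : ℝ × ℝ := midpoint ℝ (v i) (v (i + 1))

/-- The vertices `v i`, at even indices, and the points `m i` attached to the edges, at odd
indices, listed along the boundary starting from the vertex `v k`. -/
def boundaryPt (v m : Fin n → ℝ × ℝ) (k : Fin n) (t : ℕ) : ℝ × ℝ :=
  if Even t then v (k + (t / 2 : ℕ)) else m (k + (t / 2 : ℕ))

theorem boundaryPt_two_mul (v m : Fin n → ℝ × ℝ) (k : Fin n) (j : ℕ) :
    boundaryPt v m k (2 * j) = v (k + (j : Fin n)) := by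
  simp [boundaryPt]

theorem boundaryPt_two_mul_add_one (v m : Fin n → ℝ × ℝ) (k : Fin n) (j : ℕ) :
    boundaryPt v m k (2 * j + 1) = m (k + (j : Fin n)) := by
  simp [boundaryPt, Nat.mul_add_div]

@[simp]
theorem boundaryPt_zero (v m : Fin n → ℝ × ℝ) (k : Fin n) : boundaryPt v m k 0 = v k := by
  simpa using boundaryPt_two_mul v m k 0

@[simp]
theorem boundaryPt_two (v m : Fin n → ℝ × ℝ) (k : Fin n) : boundaryPt v m k 2 = v (k + 1) := by
  simpa using boundaryPt_two_mul v m k 1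

theorem boundaryPt_three (v m : Fin n → ℝ × ℝ) (k : Fin n) :
    boundaryPt v m k 3 = m (k + 1) := by
  simpa using boundaryPt_two_mul_add_one v m k 1

theorem boundaryPt_four (v m : Fin n → ℝ × ℝ) (k : Fin n) :
    boundaryPt v m k 4 = v (k + 1 + 1) := by
  simpa [add_assoc, one_add_one_eq_two] using boundaryPt_two_mul v m k 2

theorem boundaryPt_two_mul_sub_two (v m : Fin n → ℝ × ℝ) (k : Fin n) :
    boundaryPt v m k (2 * n - 2) = v (k - 1) := by
  rw [show 2 * n - 2 = 2 * (n - 1) by omega, boundaryPt_two_mul, Nat.cast_pred (NeZero.pos n)]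
  simp [sub_eq_add_neg]

theorem boundaryPt_two_mul_sub_one (v m : Fin n → ℝ × ℝ) (k : Fin n) :
    boundaryPt v m k (2 * n - 1) = m (k - 1) := by
  have hn := NeZero.pos n
  rw [show 2 * n - 1 = 2 * (n - 1) + 1 by omega, boundaryPt_two_mul_add_one, Nat.cast_pred hn]
  simp [sub_eq_add_neg]

theorem boundaryPt_edgeMidpoint (v : Fin n → ℝ × ℝ) (k : Fin n) (t : ℕ) :
    boundaryPt v (edgeMidpoint v) k t =
      midpoint ℝ (v (k + (t / 2 : ℕ))) (v (k + ((t + 1) / 2 : ℕ))) := by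
  obtain ⟨j, rfl | rfl⟩ := Nat.even_or_odd' t
  · rw [boundaryPt_two_mul, show 2 * j / 2 = j by omega, show (2 * j + 1) / 2 = j by omega,
      midpoint_self]
  · rw [boundaryPt_two_mul_add_one, show (2 * j + 1) / 2 = j by omega,
      show (2 * j + 1 + 1) / 2 = j + 1 by omega, edgeMidpoint, Nat.cast_succ, add_assoc]

theorem image_boundaryPt (v m : Fin n → ℝ × ℝ) (k : Fin n) :
    (Finset.range (2 * n)).image (boundaryPt v m k) =
      Finset.univ.image v ∪ Finset.univ.image m := by
  ext x
  simp only [Finset.mem_image, Finset.mem_range, Finset.mem_union, Finset.mem_univ, true_and]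
  constructor
  · rintro ⟨t, -, rfl⟩
    rw [boundaryPt]
    split_ifs
    · exact Or.inl ⟨_, rfl⟩
    · exact Or.inr ⟨_, rfl⟩
  · rintro (⟨i, rfl⟩ | ⟨i, rfl⟩)
    · exact ⟨2 * (i - k).val, by omega, by simp [boundaryPt_two_mul]⟩
    · exact ⟨2 * (i - k).val + 1, by omega, by simp [boundaryPt_two_mul_add_one]⟩

namespace IsConvexPolygon

/-- The two bounds `2 * p + 2 < b` and `a < 2 * (p + n) - 2` say that the `a`-th and `b`-th points
are not both on one of the two edges at the vertex with index `2 * p`. -/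
theorem orient_boundaryPt_edgeMidpoint_pos (hv : IsConvexPolygon v) (hn : 3 ≤ n) (k : Fin n)
    {p a b : ℕ} (ha : 2 * p < a) (hab : a < b) (hb : b < 2 * (p + n)) (hfirst : 2 * p + 2 < b)
    (hlast : a < 2 * (p + n) - 2) :
    0 < orient (boundaryPt v (edgeMidpoint v) k (2 * p)) (boundaryPt v (edgeMidpoint v) k a)
      (boundaryPt v (edgeMidpoint v) k b) := by
  rw [boundaryPt_two_mul, boundaryPt_edgeMidpoint v k a, boundaryPt_edgeMidpoint v k b]
  simp only [orient_midpoint_middle, orient_midpoint_right]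
  have hnonneg {x y : ℕ} (hx : p ≤ x) (hxy : x ≤ y) (hy : y ≤ p + n) := hv.orient_nonneg k hx hxy hy
  have hpos {x y : ℕ} (hx : p < x) (hxy : x < y) (hy : y < p + n) := hv.orient_pos k hx hxy hy
  have h₁ := hnonneg (x := a / 2) (y := b / 2) (by omega) (by omega) (by omega)
  have h₂ := hnonneg (x := a / 2) (y := (b + 1) / 2) (by omega) (by omega) (by omega)
  have h₃ := hnonneg (x := (a + 1) / 2) (y := b / 2) (by omega) (by omega) (by omega)
  have h₄ := hnonneg (x := (a + 1) / 2) (y := (b + 1) / 2) (by omega) (by omega) (by omega)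
  rcases Nat.lt_or_ge p (a / 2) with hpa | hpa <;>
    rcases Nat.lt_or_ge ((b + 1) / 2) (p + n) with hbp | hbp
  · linarith [hpos hpa (show a / 2 < (b + 1) / 2 by omega) hbp]
  · linarith [hpos hpa (show a / 2 < b / 2 by omega) (by omega)]
  · linarith [hpos (show p < (a + 1) / 2 by omega) (show _ < (b + 1) / 2 by omega) hbp]
  · linarith [hpos (show p < (a + 1) / 2 by omega) (show _ < b / 2 by omega) (by omega)]

end IsConvexPolygon

theorem continuous_boundaryPt (v : Fin n → ℝ × ℝ) (k : Fin n) (t : ℕ) :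
    Continuous fun m => boundaryPt v m k t := by
  unfold boundaryPt
  split_ifs <;> fun_prop

theorem eventually_orient_boundaryPt_pos (v m₀ : Fin n → ℝ × ℝ) :
    ∀ᶠ m in nhds m₀, ∀ k : Fin n, ∀ a < 2 * n, ∀ b < 2 * n, ∀ c < 2 * n,
      0 < orient (boundaryPt v m₀ k a) (boundaryPt v m₀ k b) (boundaryPt v m₀ k c) →
      0 < orient (boundaryPt v m k a) (boundaryPt v m k b) (boundaryPt v m k c) := by
  simp only [← Finset.mem_range, Filter.eventually_all, Filter.eventually_all_finset]
  intro k a _ b _ c _ h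
  have ha := continuous_boundaryPt v k a
  have hb := continuous_boundaryPt v k b
  have hc := continuous_boundaryPt v k c
  have horient : Continuous fun m =>
      orient (boundaryPt v m k a) (boundaryPt v m k b) (boundaryPt v m k c) := by
    simp only [orient_eq]
    fun_prop
  exact horient.continuousAt.eventually (lt_mem_nhds h)

theorem IsConvexPolygon.edgePattern_boundaryPt (hv : IsConvexPolygon v) (hn : 3 ≤ n) (k : Fin n)
    (hpos : ∀ a < 2 * n, ∀ b < 2 * n, ∀ c < 2 * n,
      0 < orient (boundaryPt v (edgeMidpoint v) k a) (boundaryPt v (edgeMidpoint v) k b)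
        (boundaryPt v (edgeMidpoint v) k c) →
      0 < orient (boundaryPt v m k a) (boundaryPt v m k b) (boundaryPt v m k c))
    (hinner : ∀ i, 0 < orient (v i) (v (i + 1)) (m i)) : EdgePattern n (boundaryPt v m k) := by
  have hmid : boundaryPt v (edgeMidpoint v) k 1 = midpoint ℝ (boundaryPt v (edgeMidpoint v) k 0)
      (boundaryPt v (edgeMidpoint v) k 2) := by
    rw [boundaryPt_edgeMidpoint, boundaryPt_zero, boundaryPt_two]; simp
  have hedge (b : ℕ) (hb3 : 3 ≤ b) (hb : b < 2 * n) :=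
    hv.orient_boundaryPt_edgeMidpoint_pos hn k (p := 0) two_pos hb3 (by omega) hb3 (by omega)
  constructor
  case zero_one_pos =>
    intro b hb3 hb
    refine hpos 0 (by omega) 1 (by omega) b hb ?_
    simpa [hmid, orient_midpoint_middle] using hedge b hb3 hb
  case one_two_pos =>
    intro b hb3 hb
    refine hpos 1 (by omega) 2 (by omega) b hb ?_
    simpa [hmid, orient_midpoint_left] using hedge b hb3 hb
  case zero_pos =>
    intro a b ha hab hb hlast
    exact hpos 0 (by omega) a (by omega) b hb (hv.orient_boundaryPt_edgeMidpoint_pos hn k (p := 0)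
      (by omega) hab (by omega) (by omega) (by omega))
  case two_pos =>
    intro a b ha hab hb hfirst
    exact hpos 2 (by omega) a (by omega) b hb (hv.orient_boundaryPt_edgeMidpoint_pos hn k (p := 1)
      (by omega) hab (by omega) (by omega) (by omega))
  case zero_last_neg =>
    rw [boundaryPt_zero, boundaryPt_two_mul_sub_two, boundaryPt_two_mul_sub_one, orient_swap]
    simpa using hinner (k - 1)
  case two_first_neg =>
    rw [boundaryPt_two, boundaryPt_three, boundaryPt_four, ← orient_rotate, orient_swap]
    simpa using hinner (k + 1)

theorem midpoint_family_adjacent_general (hn : 3 ≤ n) (hv : IsConvexPolygon v) :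
    ∃ ε > (0 : ℝ), ∀ m : Fin n → ℝ × ℝ,
      (∀ i, dist (m i) (midpoint ℝ (v i) (v (i + 1))) < ε) →
      (∀ i, 0 < orient (v i) (v (i + 1)) (m i)) →
      ∀ k : Fin n,
        nsep (Finset.univ.image v ∪ Finset.univ.image m) (v k) (v (k + 1)) = 2 * n - 1 ∧
        Orchard (Finset.univ.image v ∪ Finset.univ.image m) (v k) (v (k + 1)) := by
  obtain ⟨ε, hε, hball⟩ :=
    Metric.eventually_nhds_iff.1 (eventually_orient_boundaryPt_pos v (edgeMidpoint v))
  refine ⟨ε, hε, fun m hm hinner k => ?_⟩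
  have hpattern := hv.edgePattern_boundaryPt hn k (hball ((dist_pi_lt_iff hε).2 hm) k) hinner
  rw [← image_boundaryPt v m k, ← boundaryPt_zero v m k, ← boundaryPt_two v m k]
  exact ⟨hpattern.nsep_eq hn, hpattern.orchard hn⟩

end ConvexPolygon

section RegularPolygon

theorem sin_two_mul_add_sin_two_mul_sub (p q : ℝ) :
    Real.sin (2 * p) + Real.sin (2 * q) - Real.sin (2 * p + 2 * q) =
      4 * Real.sin p * Real.sin q * Real.sin (p + q) := by
  have hcos (s : ℝ) : Real.cos (2 * s) = 1 - 2 * Real.sin s ^ 2 := by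
    rw [Real.cos_two_mul, Real.cos_sq']; ring
  rw [Real.sin_add (2 * p), Real.sin_add p, hcos, hcos, Real.sin_two_mul, Real.sin_two_mul]
  ring

theorem orient_cos_sin (x y t : ℝ) :
    orient (Real.cos (2 * x), Real.sin (2 * x)) (Real.cos (2 * y), Real.sin (2 * y))
      (Real.cos (2 * t), Real.sin (2 * t)) =
      4 * Real.sin (y - x) * Real.sin (t - y) * Real.sin (t - x) := by
  have h := sin_two_mul_add_sin_two_mul_sub (y - x) (t - y)
  rw [← mul_add, sub_add_sub_cancel', mul_sub, mul_sub, mul_sub] at h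
  rw [← h]
  simp only [orient_eq, Real.sin_sub]
  ring

theorem isConvexPolygon_vtx (n : ℕ) : IsConvexPolygon (vtx n) := by
  intro i j k hij hjk
  have hsin {a b : Fin n} (hab : a < b) : 0 < Real.sin (Real.pi * b / n - Real.pi * a / n) := by
    have hn : (0 : ℝ) < n := Nat.cast_pos.2 b.pos
    have hlt : Real.pi * a / n < Real.pi * b / n := by gcongr; exact hab
    have hb : Real.pi * b / n < Real.pi := by
      rw [div_lt_iff₀ hn]; gcongr; exact b.isLt
    have ha : 0 ≤ Real.pi * a / n := by positivity
    exact Real.sin_pos_of_pos_of_lt_pi (by linarith) (by linarith)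
  have hij' := hsin hij
  have hjk' := hsin hjk
  have hik' := hsin (hij.trans hjk)
  simp only [vtx, mul_assoc 2 Real.pi, mul_div_assoc (2 : ℝ), orient_cos_sin]
  positivity

end RegularPolygon

/-- For `n ≥ 3`, consider the `2n`-point configuration formed by the vertices of
a regular `n`-gon together with, for each edge, a point interior to the polygon
infinitesimally close to the midpoint of that edge (in generic position).  Then
for two adjacent polygon vertices `P = vtx n k`, `Q = vtx n (k+1)` one has
`n(P,Q) = 2n - 1`, and consequently `P ∼ Q` under the Orchard relation. -/
theorem midpoint_family_adjacent (n : ℕ) [NeZero n] (hn : 3 ≤ n) :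
    ∃ ε > (0 : ℝ), ∀ m : Fin n → ℝ × ℝ,
      (∀ i : Fin n, dist (m i) (midpoint ℝ (vtx n i) (vtx n (i + 1))) < ε) →
      (∀ i : Fin n, m i ∈ interior (convexHull ℝ (Set.range (vtx n)))) →
      Generic (Finset.image (vtx n) Finset.univ ∪ Finset.image m Finset.univ) →
      ∀ k : Fin n,
        nsep (Finset.image (vtx n) Finset.univ ∪ Finset.image m Finset.univ)
            (vtx n k) (vtx n (k + 1)) = 2 * n - 1 ∧
        Orchard (Finset.image (vtx n) Finset.univ ∪ Finset.image m Finset.univ)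
            (vtx n k) (vtx n (k + 1)) := by
  obtain ⟨ε, hε, h⟩ := midpoint_family_adjacent_general hn (isConvexPolygon_vtx n)
  exact ⟨ε, hε, fun m hm hint _ =>
    h m hm fun i => (isConvexPolygon_vtx n).orient_edge_pos hn i (hint i)⟩
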